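/- (Theorem 2, convergence without the channel-statistics condition.) In the over-the-air federated PG model, suppose 0 < α ≤ 1/(m_h·L), and set Λ' = M·(N+1)·m_h² + σ_h². Then for every integer K ≥ 1, (1/K)·Σ_{k=0}^{K−1} E[‖∇J(θ^k)‖²] ≤ 2·M·N·m_h·(J(θ^0) − J*)/(α·K·Λ') + M·σ_h²·V²/Λ' + σ_h²·V²/Λ' + M·σ̄²/(N·Λ'). -/

import Mathlib

open MeasureTheory ProbabilityTheory Gradient

/-- The family `{h_i}_i ∪ {X_{i,m}}_{i,m} ∪ {n}` combined into a single family of random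
variables with common codomain `ℝ × ℝ^d`; each member generates exactly the σ-algebra of the
corresponding original random variable, so (conditional) mutual independence of this family is
equivalent to (conditional) mutual independence of the original family. -/
def otaFam {d N M : ℕ} {Ω : Type*}
    (h : Fin N → Ω → ℝ) (X : Fin N → Fin M → Ω → EuclideanSpace ℝ (Fin d))
    (n : Ω → EuclideanSpace ℝ (Fin d)) :
    Fin N ⊕ (Fin N × Fin M) ⊕ Unit → Ω → ℝ × EuclideanSpace ℝ (Fin d)
  | Sum.inl i => fun ω => (h i ω, 0)
  | Sum.inr (Sum.inl (i, m)) => fun ω => (0, X i m ω)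
  | Sum.inr (Sum.inr _) => fun ω => (0, n ω)


lemma ota_descent {d : ℕ} (L : ℝ) (J : EuclideanSpace ℝ (Fin d) → ℝ) (hJ : Differentiable ℝ J)
    (hLip : ∀ x y : EuclideanSpace ℝ (Fin d),
      ‖gradient J x - gradient J y‖ ≤ L * ‖x - y‖) (x w : EuclideanSpace ℝ (Fin d)) :
    J (x + w) ≤ J x + inner ℝ (gradient J x) w + L / 2 * ‖w‖ ^ 2 := by
  let φ : ℝ → ℝ := fun t => J (x + t • w) - t * inner ℝ (gradient J x) w - L / 2 * ‖w‖ ^ 2 * t ^ 2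
  have hd : ∀ t, HasDerivAt φ (inner ℝ (gradient J (x + t • w)) w - inner ℝ (gradient J x) w
      - L / 2 * ‖w‖ ^ 2 * (2 * t)) t := by
    intro t
    have h1 : HasDerivAt (fun t : ℝ => x + t • w) w t := by
      simpa using ((hasDerivAt_id t).smul_const w).const_add x
    have h2 := (hJ (x + t • w)).hasGradientAt.hasFDerivAt.comp_hasDerivAt t h1
    have h3 : HasDerivAt (fun t : ℝ => t * inner ℝ (gradient J x) w) (inner ℝ (gradient J x) w) t := by
      simpa using (hasDerivAt_id t).mul_const (inner ℝ (gradient J x) w)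
    have h4 : HasDerivAt (fun t : ℝ => L / 2 * ‖w‖ ^ 2 * t ^ 2) (L / 2 * ‖w‖ ^ 2 * (2 * t)) t := by
      simpa using (hasDerivAt_pow 2 t).const_mul (L / 2 * ‖w‖ ^ 2)
    exact (h2.sub h3).sub h4
  have hanti : AntitoneOn φ (Set.Icc 0 1) := by
    apply antitoneOn_of_deriv_nonpos (convex_Icc 0 1)
    · exact fun t _ => (hd t).continuousAt.continuousWithinAt
    · exact fun t _ => (hd t).differentiableAt.differentiableWithinAt
    · intro t ht
      rw [interior_Icc] at ht
      rw [(hd t).deriv, ← inner_sub_left]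
      have h1 := real_inner_le_norm (gradient J (x + t • w) - gradient J x) w
      have h2 := hLip (x + t • w) x
      rw [add_sub_cancel_left, norm_smul, Real.norm_of_nonneg ht.1.le] at h2
      have h3 := mul_le_mul_of_nonneg_right h2 (norm_nonneg w)
      nlinarith
  have := hanti (show (0:ℝ) ∈ Set.Icc 0 1 by simp) (show (1:ℝ) ∈ Set.Icc 0 1 by simp) zero_le_one
  simp only [φ, one_smul, zero_smul, add_zero] at this
  linarith

lemma ota_ae_iIndepFun {α Ω ι β : Type*} [Finite ι] {mα : MeasurableSpace α} {mΩ : MeasurableSpace Ω}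
    [mβ : MeasurableSpace β] [MeasurableSpace.CountablyGenerated β]
    (κ : Kernel α Ω) [IsMarkovKernel κ] (P : Measure α) (f : ι → Ω → β) (hf : ∀ i, Measurable (f i))
    (hi : Kernel.iIndepFun f κ P) : ∀ᵐ a ∂P, iIndepFun f (κ a) := by
  classical
  have := Fintype.ofFinite ι
  let G : Set (Set β) := generateSetAlgebra (MeasurableSpace.countableGeneratingSet β)
  have hGc : G.Countable := countable_generateSetAlgebra MeasurableSpace.countable_countableGeneratingSet
  have hGgen : MeasurableSpace.generateFrom G = mβ := by
    rw [generateFrom_generateSetAlgebra_eq, MeasurableSpace.generateFrom_countableGeneratingSet]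
  have hGpi : IsPiSystem G := fun s hs t ht _ => isSetAlgebra_generateSetAlgebra.inter_mem hs ht
  have hGm : ∀ s ∈ G, MeasurableSet s := fun s hs => by
    rw [← hGgen]; exact MeasurableSpace.measurableSet_generateFrom hs
  have : Countable G := hGc
  rw [Kernel.iIndepFun_iff_measure_inter_preimage_eq_mul] at hi
  have key : ∀ᵐ a ∂P, ∀ (S : Finset ι) (s : ι → G),
      κ a (⋂ i ∈ S, (f i) ⁻¹' (s i)) = ∏ i ∈ S, κ a ((f i) ⁻¹' (s i)) := by
    rw [ae_all_iff]; intro S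
    rw [ae_all_iff]; intro s
    exact hi S (fun i _ => hGm _ (s i).2)
  filter_upwards [key] with a ha
  rw [iIndepFun_iff_iIndep]
  refine iIndepSets.iIndep (fun i => (hf i).comap_le) (fun i => {t | ∃ s ∈ G, f i ⁻¹' s = t})
    (fun i => hGpi.comap (f i)) (fun i => ?_) ?_
  · rw [← hGgen, MeasurableSpace.comap_generateFrom]; rfl
  · rw [iIndepSets_iff]
    intro S t ht
    have hu : Set.univ ∈ G := isSetAlgebra_generateSetAlgebra.univ_mem
    choose! s hs using ht
    have := ha S (fun i => if h : i ∈ S then ⟨s i, (hs i h).1⟩ else ⟨Set.univ, hu⟩)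
    convert this using 1
    · congr 1
      refine Set.iInter₂_congr fun i hi => ?_
      simp [hi, (hs i hi).2]
    · refine Finset.prod_congr rfl fun i hi => ?_
      simp [hi, (hs i hi).2]

lemma ota_ae_iIndepFun_cond {Ω ι β : Type*} [Finite ι] {m mΩ : MeasurableSpace Ω}
    [StandardBorelSpace Ω] [mβ : MeasurableSpace β] [MeasurableSpace.CountablyGenerated β]
    (hm : m ≤ mΩ) (μ : Measure Ω) [IsFiniteMeasure μ] (f : ι → Ω → β) (hf : ∀ i, AEMeasurable (f i) μ)
    (hi : iCondIndepFun m hm f μ) : ∀ᵐ ω ∂μ, iIndepFun f (condExpKernel μ m ω) := by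
  have h0 : ∀ i, ∀ᵐ a ∂(μ.trim hm), f i =ᵐ[condExpKernel μ m a] (hf i).mk (f i) := by
    intro i
    refine Measure.ae_ae_of_ae_comp ?_
    rw [condExpKernel_comp_trim hm]
    exact (hf i).ae_eq_mk
  have h1 : Kernel.iIndepFun (fun i => (hf i).mk (f i)) (condExpKernel μ m) (μ.trim hm) :=
    Kernel.iIndepFun.congr' hi h0
  have h2 := ota_ae_iIndepFun _ _ _ (fun i => (hf i).measurable_mk) h1
  apply ae_of_ae_trim hm
  filter_upwards [h2, ae_all_iff.2 h0] with a ha hb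
  exact ha.congr (fun i => (hb i).symm)

lemma ota_condExp_const {Ω β F : Type*} {m mΩ : MeasurableSpace Ω} [StandardBorelSpace Ω]
    [NormedAddCommGroup F] [NormedSpace ℝ F] [CompleteSpace F] [MeasurableSpace β]
    (hm : m ≤ mΩ) (μ : Measure Ω) [IsProbabilityMeasure μ] (f : Ω → β) (hf : AEMeasurable f μ)
    (hi : Indep (MeasurableSpace.comap f inferInstance) m μ) (φ : β → F)
    (hφ : StronglyMeasurable φ) (hint : Integrable (fun ω => φ (f ω)) μ) :
    ∀ᵐ ω ∂μ, ∫ y, φ (f y) ∂(condExpKernel μ m ω) = ∫ y, φ (f y) ∂μ := by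
  have e : MeasurableSpace.comap id m = m := MeasurableSpace.comap_id
  have h1 : @IndepFun Ω β Ω mΩ _ m f id μ := by
    have : Indep (MeasurableSpace.comap f inferInstance) (MeasurableSpace.comap id m) μ := by
      rw [e]; exact hi
    exact this
  have h2 : @IndepFun Ω β Ω mΩ _ m (hf.mk f) id μ := 
    @IndepFun.congr Ω β Ω mΩ μ f id _ m _ _ h1 hf.ae_eq_mk (Filter.EventuallyEq.refl _ _)
  have h2' : Indep (MeasurableSpace.comap (hf.mk f) inferInstance) (MeasurableSpace.comap id m) μ := h2
  rw [e] at h2'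
  have h3 := condExp_indep_eq hf.measurable_mk.comap_le hm
    (f := fun ω => φ (hf.mk f ω)) (hφ.comp_measurable (comap_measurable _)) h2'
  have h4 : (fun ω => φ (f ω)) =ᵐ[μ] (fun ω => φ (hf.mk f ω)) := by
    filter_upwards [hf.ae_eq_mk] with ω h; rw [h]
  have h5 := condExp_congr_ae (m := m) h4
  have h6 := condExp_ae_eq_integral_condExpKernel hm hint
  filter_upwards [h3, h5, h6] with ω a b c
  rw [← c, b, a, integral_congr_ae h4]

section
variable {d N M : ℕ} {Ω : Type*} {mΩ : MeasurableSpace Ω}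

/-- index block of agent `i` -/
def otaBlk (N M : ℕ) (i : Fin N) : Finset (Fin N ⊕ (Fin N × Fin M) ⊕ Unit) :=
  Finset.univ.image fun m => Sum.inr (Sum.inl (i, m))

lemma mem_otaBlk {i : Fin N} (m : Fin M) : Sum.inr (Sum.inl (i, m)) ∈ otaBlk N M i := by
  simp [otaBlk]

lemma otaFam_aemeas (ν : Measure Ω) (h : Fin N → Ω → ℝ)
    (X : Fin N → Fin M → Ω → EuclideanSpace ℝ (Fin d)) (n : Ω → EuclideanSpace ℝ (Fin d))
    (hh2 : ∀ i, AEMeasurable (h i) ν) (hX2 : ∀ i m, AEMeasurable (X i m) ν) (hn2 : AEMeasurable n ν) :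
    ∀ a, AEMeasurable (otaFam h X n a) ν := by
  rintro (i | ⟨i, m⟩ | _)
  · exact (hh2 i).prodMk aemeasurable_const
  · exact aemeasurable_const.prodMk (hX2 i m)
  · exact aemeasurable_const.prodMk hn2

lemma ota_jensen (ν : Measure Ω) [IsProbabilityMeasure ν] (X : Ω → EuclideanSpace ℝ (Fin d))
    (hX : MemLp X 2 ν) : ‖∫ ω, X ω ∂ν‖ ^ 2 ≤ ∫ ω, ‖X ω‖ ^ 2 ∂ν := by
  set g := ∫ ω, X ω ∂ν with hg
  have hi : Integrable X ν := hX.integrable (by norm_num)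
  have h1 : ∫ ω, (2 * inner ℝ g (X ω) - ‖g‖ ^ 2) ∂ν ≤ ∫ ω, ‖X ω‖ ^ 2 ∂ν := by
    apply integral_mono
    · exact ((hi.const_inner g).const_mul 2).sub (integrable_const _)
    · exact hX.integrable_norm_pow (by norm_num)
    · intro ω
      have := norm_sub_sq_real g (X ω)
      have := sq_nonneg ‖g - X ω‖
      simp only; linarith
  rw [integral_sub ((hi.const_inner g).const_mul 2) (integrable_const _), integral_const_mul,
    integral_inner hi, ← hg, real_inner_self_eq_norm_sq] at h1
  simp at h1; linarith

lemma ota_integrable_inner {ν : Measure Ω} {f g : Ω → EuclideanSpace ℝ (Fin d)}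
    (hf : MemLp f 2 ν) (hg : MemLp g 2 ν) : Integrable (fun ω => inner ℝ (f ω) (g ω)) ν := by
  refine Integrable.mono' (MemLp.integrable_mul hf.norm hg.norm) (hf.1.inner hg.1) ?_
  exact Filter.Eventually.of_forall fun ω => norm_inner_le_norm _ _

lemma ota_moments (ν : Measure Ω) [IsProbabilityMeasure ν] (hM : 0 < M)
    (h : Fin N → Ω → ℝ)
    (X : Fin N → Fin M → Ω → EuclideanSpace ℝ (Fin d)) (n : Ω → EuclideanSpace ℝ (Fin d))
    (mh σ V s : ℝ) (hσ : 0 ≤ σ) (g : EuclideanSpace ℝ (Fin d))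
    (hind : iIndepFun (otaFam h X n) ν)
    (hh2 : ∀ i, MemLp (h i) 2 ν) (hX2 : ∀ i m, MemLp (X i m) 2 ν) (hn2 : MemLp n 2 ν)
    (hEh : ∀ i, ∫ ω, h i ω ∂ν = mh) (hEh2 : ∀ i, ∫ ω, (h i ω) ^ 2 ∂ν = σ)
    (hEn : ∫ ω, n ω ∂ν = 0) (hVn : ∫ ω, ‖n ω‖ ^ 2 ∂ν ≤ s)
    (hEX : ∀ i m, ∫ ω, X i m ω ∂ν = g) (hVX : ∀ i m, ∫ ω, ‖X i m ω‖ ^ 2 ∂ν ≤ V ^ 2) :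
    MemLp (fun ω => (∑ i : Fin N, h i ω • ((1 / (M : ℝ)) • ∑ m : Fin M, X i m ω)) + n ω) 2 ν ∧
    ∫ ω, ((∑ i : Fin N, h i ω • ((1 / (M : ℝ)) • ∑ m : Fin M, X i m ω)) + n ω) ∂ν
      = ((N : ℝ) * mh) • g ∧
    ∫ ω, ‖(∑ i : Fin N, h i ω • ((1 / (M : ℝ)) • ∑ m : Fin M, X i m ω)) + n ω‖ ^ 2 ∂ν
      ≤ N * σ * V ^ 2 + N * (N - 1) * mh ^ 2 * ‖g‖ ^ 2 + s := by
  classical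
  have hM0 : (M : ℝ) ≠ 0 := by positivity
  set u : Fin N → Ω → EuclideanSpace ℝ (Fin d) :=
    fun i ω => (1 / (M : ℝ)) • ∑ m : Fin M, X i m ω with hu
  have hmeas := otaFam_aemeas ν h X n (fun i => (hh2 i).1.aemeasurable)
    (fun i m => (hX2 i m).1.aemeasurable) hn2.1.aemeasurable
  have hu2 : ∀ i, MemLp (u i) 2 ν := fun i =>
    (memLp_finsetSum Finset.univ (fun m _ => hX2 i m)).const_smul (1 / (M : ℝ))
  have hu1 : ∀ i, Integrable (u i) ν := fun i => (hu2 i).integrable (by norm_num)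
  have hh1 : ∀ i, Integrable (h i) ν := fun i => (hh2 i).integrable (by norm_num)
  have hEu : ∀ i, ∫ ω, u i ω ∂ν = g := by
    intro i
    simp only [hu]
    rw [integral_smul, integral_finsetSum _ (fun m _ => (hX2 i m).integrable (by norm_num))]
    simp only [hEX, Finset.sum_const, Finset.card_univ, Fintype.card_fin]
    rw [← Nat.cast_smul_eq_nsmul ℝ, smul_smul, one_div, inv_mul_cancel₀ hM0, one_smul]
  have hVu : ∀ i, ∫ ω, ‖u i ω‖ ^ 2 ∂ν ≤ V ^ 2 := by
    intro i
    have h1 : ∫ ω, ‖u i ω‖ ^ 2 ∂ν ≤ ∫ ω, (1 / (M : ℝ)) * ∑ m, ‖X i m ω‖ ^ 2 ∂ν := by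
      apply integral_mono ((hu2 i).integrable_norm_pow (by norm_num))
      · exact (integrable_finsetSum _ fun m _ => (hX2 i m).integrable_norm_pow (by norm_num)).const_mul _
      intro ω
      simp only [hu, norm_smul, mul_pow]
      have h1 : ‖∑ m, X i m ω‖ ^ 2 ≤ M * ∑ m, ‖X i m ω‖ ^ 2 := by
        calc _ ≤ (∑ m, ‖X i m ω‖) ^ 2 := by gcongr; exact norm_sum_le _ _
          _ ≤ _ := by simpa using sq_sum_le_card_mul_sum_sq (s := Finset.univ) (f := fun m => ‖X i m ω‖)
      calc ‖1 / (M : ℝ)‖ ^ 2 * ‖∑ m, X i m ω‖ ^ 2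
          ≤ ‖1 / (M : ℝ)‖ ^ 2 * (M * ∑ m, ‖X i m ω‖ ^ 2) := by gcongr
        _ = _ := by rw [Real.norm_of_nonneg (by positivity)]; field_simp
    rw [integral_const_mul, integral_finsetSum _
      (fun m _ => (hX2 i m).integrable_norm_pow (by norm_num))] at h1
    refine h1.trans ?_
    calc (1 / (M : ℝ)) * ∑ m, ∫ ω, ‖X i m ω‖ ^ 2 ∂ν ≤ (1 / (M : ℝ)) * ∑ m : Fin M, V ^ 2 := by
          gcongr with m; exact hVX i m
      _ = V ^ 2 := by simp; field_simp
  have hφu : ∀ (i : Fin N), Measurable (fun p : (otaBlk N M i) → ℝ × EuclideanSpace ℝ (Fin d) =>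
      (1 / (M : ℝ)) • ∑ m : Fin M, (p ⟨_, mem_otaBlk m⟩).2) := by
    intro i; fun_prop
  have ind1 : ∀ i, IndepFun (h i) (u i) ν := by
    intro i
    have := hind.indepFun_finset₀ {Sum.inl i} (otaBlk N M i) (by simp [otaBlk]) hmeas
    have hm0 : Measurable (fun p : ({Sum.inl i} : Finset (Fin N ⊕ (Fin N × Fin M) ⊕ Unit)) →
        ℝ × EuclideanSpace ℝ (Fin d) => (p ⟨Sum.inl i, Finset.mem_singleton_self _⟩).1) := by
      fun_prop
    exact this.comp hm0 (hφu i)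
  have ind2 : ∀ i j, i ≠ j → IndepFun (fun ω => h i ω • u i ω) (fun ω => h j ω • u j ω) ν := by
    intro i j hij
    have := hind.indepFun_finset₀ (insert (Sum.inl i) (otaBlk N M i))
      (insert (Sum.inl j) (otaBlk N M j)) (by
        rw [Finset.disjoint_left]
        simp only [otaBlk, Finset.mem_insert, Finset.mem_image, Finset.mem_univ, true_and]
        rintro a (rfl | ⟨m, rfl⟩) <;> simp [hij, hij.symm]) hmeas
    have hm : ∀ i : Fin N, Measurable (fun p : ((insert (Sum.inl i) (otaBlk N M i) :
        Finset (Fin N ⊕ (Fin N × Fin M) ⊕ Unit))) → ℝ × EuclideanSpace ℝ (Fin d) =>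
      (p ⟨Sum.inl i, Finset.mem_insert_self _ _⟩).1 • ((1 / (M : ℝ)) • ∑ m : Fin M,
        (p ⟨_, Finset.mem_insert_of_mem (mem_otaBlk m)⟩).2)) := by
      intro i; fun_prop
    exact this.comp (hm i) (hm j)
  have ind3 : ∀ i, IndepFun (fun ω => h i ω • u i ω) n ν := by
    intro i
    have := hind.indepFun_finset₀ (insert (Sum.inl i) (otaBlk N M i))
      {Sum.inr (Sum.inr ())} (by simp [otaBlk]) hmeas
    have hm : Measurable (fun p : ((insert (Sum.inl i) (otaBlk N M i) :
        Finset (Fin N ⊕ (Fin N × Fin M) ⊕ Unit))) → ℝ × EuclideanSpace ℝ (Fin d) =>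
      (p ⟨Sum.inl i, Finset.mem_insert_self _ _⟩).1 • ((1 / (M : ℝ)) • ∑ m : Fin M,
        (p ⟨_, Finset.mem_insert_of_mem (mem_otaBlk m)⟩).2)) := by
      fun_prop
    have hm0 : Measurable (fun p : ({Sum.inr (Sum.inr ())} :
        Finset (Fin N ⊕ (Fin N × Fin M) ⊕ Unit)) →
        ℝ × EuclideanSpace ℝ (Fin d) => (p ⟨Sum.inr (Sum.inr ()), Finset.mem_singleton_self _⟩).2) := by
      fun_prop
    exact this.comp hm hm0
  have hY1 : ∀ i, Integrable (fun ω => h i ω • u i ω) ν := fun i =>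
    (ind1 i).integrable_smul (hh1 i) (hu1 i)
  have hEY : ∀ i, ∫ ω, h i ω • u i ω ∂ν = mh • g := fun i => by
    rw [(ind1 i).integral_fun_smul_eq_smul_integral (hh1 i).1 (hu1 i).1, hEh, hEu]
  have indsq : ∀ i, IndepFun (fun ω => h i ω ^ 2) (fun ω => ‖u i ω‖ ^ 2) ν := fun i =>
    (ind1 i).comp (φ := fun x => x ^ 2) (ψ := fun x => ‖x‖ ^ 2) (by fun_prop) (by fun_prop)
  have hsq : ∀ i, (fun ω => ‖h i ω • u i ω‖ ^ 2) = fun ω => h i ω ^ 2 * ‖u i ω‖ ^ 2 := by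
    intro i; ext ω; rw [norm_smul, mul_pow, Real.norm_eq_abs, sq_abs]
  have hhs : ∀ i, Integrable (fun ω => h i ω ^ 2) ν := fun i => (hh2 i).integrable_sq
  have hus : ∀ i, Integrable (fun ω => ‖u i ω‖ ^ 2) ν := fun i =>
    (hu2 i).integrable_norm_pow (by norm_num)
  have hY2 : ∀ i, MemLp (fun ω => h i ω • u i ω) 2 ν := by
    intro i
    rw [memLp_two_iff_integrable_sq_norm (hY1 i).1, hsq]
    exact (indsq i).integrable_mul (hhs i) (hus i)
  have hEY2 : ∀ i, ∫ ω, ‖h i ω • u i ω‖ ^ 2 ∂ν ≤ σ * V ^ 2 := by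
    intro i
    rw [hsq, (indsq i).integral_fun_mul_eq_mul_integral (hhs i).1 (hus i).1, hEh2]
    exact mul_le_mul_of_nonneg_left (hVu i) hσ
  have hn1 : Integrable n ν := hn2.integrable (by norm_num)
  have hS2 : MemLp (fun ω => ∑ i, h i ω • u i ω) 2 ν := memLp_finsetSum _ (fun i _ => hY2 i)
  refine ⟨hS2.add hn2, ?_, ?_⟩
  · rw [integral_add (integrable_finsetSum _ fun i _ => hY1 i) hn1,
      integral_finsetSum _ fun i _ => hY1 i]
    simp only [hEY, hEn, add_zero, Finset.sum_const, Finset.card_univ, Fintype.card_fin]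
    rw [← Nat.cast_smul_eq_nsmul ℝ, smul_smul]
  · have hYn : ∀ i, ∫ ω, inner ℝ (h i ω • u i ω) (n ω) ∂ν = 0 := by
      intro i
      have : ∫ ω, inner ℝ (h i ω • u i ω) (n ω) ∂ν
          = inner ℝ (∫ ω, h i ω • u i ω ∂ν) (∫ ω, n ω ∂ν) :=
        (ind3 i).integral_bilin (hY1 i) hn1 (innerSL ℝ)
      rw [this, hEn, inner_zero_right]
    have hYY : ∀ i j, i ≠ j →
        ∫ ω, inner ℝ (h i ω • u i ω) (h j ω • u j ω) ∂ν = mh ^ 2 * ‖g‖ ^ 2 := by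
      intro i j hij
      have : ∫ ω, inner ℝ (h i ω • u i ω) (h j ω • u j ω) ∂ν
          = inner ℝ (∫ ω, h i ω • u i ω ∂ν) (∫ ω, h j ω • u j ω ∂ν) :=
        (ind2 i j hij).integral_bilin (hY1 i) (hY1 j) (innerSL ℝ)
      rw [this, hEY, hEY, real_inner_smul_left, real_inner_smul_right, real_inner_self_eq_norm_sq]; ring
    have iYY : ∀ i j, Integrable (fun ω => inner ℝ (h i ω • u i ω) (h j ω • u j ω)) ν :=
      fun i j => ota_integrable_inner (hY2 i) (hY2 j)
    have iYn : ∀ i, Integrable (fun ω => inner ℝ (h i ω • u i ω) (n ω)) ν :=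
      fun i => ota_integrable_inner (hY2 i) hn2
    have hexp : ∀ ω, ‖(∑ i, h i ω • u i ω) + n ω‖ ^ 2 =
        (∑ i, ∑ j, inner ℝ (h i ω • u i ω) (h j ω • u j ω))
          + 2 * (∑ i, inner ℝ (h i ω • u i ω) (n ω)) + ‖n ω‖ ^ 2 := by
      intro ω
      rw [norm_add_sq_real, ← real_inner_self_eq_norm_sq (∑ i, h i ω • u i ω), sum_inner, sum_inner]
      simp only [inner_sum]
    have i1 : Integrable (fun ω => ∑ i, ∑ j, inner ℝ (h i ω • u i ω) (h j ω • u j ω)) ν :=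
      integrable_finsetSum _ fun i _ => integrable_finsetSum _ fun j _ => iYY i j
    have i2 : Integrable (fun ω => 2 * ∑ i, inner ℝ (h i ω • u i ω) (n ω)) ν :=
      (integrable_finsetSum _ fun i _ => iYn i).const_mul 2
    rw [integral_congr_ae (Filter.Eventually.of_forall hexp)]
    have i3 : Integrable (fun ω => (∑ i, ∑ j, inner ℝ (h i ω • u i ω) (h j ω • u j ω))
        + 2 * ∑ i, inner ℝ (h i ω • u i ω) (n ω)) ν := i1.add i2
    rw [integral_add i3 (hn2.integrable_norm_pow (by norm_num)), integral_add i1 i2,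
      integral_const_mul, integral_finsetSum _ fun i _ => iYn i,
      integral_finsetSum _ fun i _ => integrable_finsetSum _ fun j _ => iYY i j]
    simp only [hYn, Finset.sum_const_zero, mul_zero, add_zero]
    gcongr
    have hrow : ∀ i, ∫ ω, ∑ j, inner ℝ (h i ω • u i ω) (h j ω • u j ω) ∂ν
        ≤ σ * V ^ 2 + (N - 1) * (mh ^ 2 * ‖g‖ ^ 2) := by
      intro i
      rw [integral_finsetSum _ fun j _ => iYY i j, ← Finset.add_sum_erase _ _ (Finset.mem_univ i)]
      have e : ∑ j ∈ Finset.univ.erase i, ∫ ω, inner ℝ (h i ω • u i ω) (h j ω • u j ω) ∂ν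
          = (N - 1) * (mh ^ 2 * ‖g‖ ^ 2) := by
        rw [Finset.sum_congr rfl fun j hj => hYY i j (Finset.ne_of_mem_erase hj).symm]
        rw [Finset.sum_const, Finset.card_erase_of_mem (Finset.mem_univ i), Finset.card_univ,
          Fintype.card_fin, nsmul_eq_mul, Nat.cast_pred (Fin.pos i)]
      rw [e]
      simp only [real_inner_self_eq_norm_sq]
      gcongr
      exact hEY2 i
    refine (Finset.sum_le_sum fun i _ => hrow i).trans (le_of_eq ?_)
    simp; ring
end

lemma ota_memLp_kernel {Ω F : Type*} {m mΩ : MeasurableSpace Ω} [StandardBorelSpace Ω]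
    [NormedAddCommGroup F] (hm : m ≤ mΩ) (μ : Measure Ω) [IsProbabilityMeasure μ] (f : Ω → F)
    (hf : MemLp f 2 μ) : ∀ᵐ ω ∂μ, MemLp f 2 (condExpKernel μ m ω) := by
  have h1 := (hf.integrable (by norm_num)).condExpKernel_ae (m := m)
  have h2 := ((memLp_two_iff_integrable_sq_norm hf.1).1 hf).condExpKernel_ae (m := m)
  filter_upwards [h1, h2] with ω a b
  exact (memLp_two_iff_integrable_sq_norm a.1).2 b

lemma ota_step {d N M : ℕ} {Ω : Type*} {m mΩ : MeasurableSpace Ω} [StandardBorelSpace Ω]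
    (hm : m ≤ mΩ) (μ : Measure Ω) [IsProbabilityMeasure μ] (hN : 0 < N) (hM : 0 < M)
    (h : Fin N → Ω → ℝ)
    (X : Fin N → Fin M → Ω → EuclideanSpace ℝ (Fin d)) (n : Ω → EuclideanSpace ℝ (Fin d))
    (mh σ V s : ℝ) (hσ : 0 ≤ σ) (g : Ω → EuclideanSpace ℝ (Fin d)) (hg : StronglyMeasurable[m] g)
    (hind : iCondIndepFun m hm (otaFam h X n) μ)
    (hh2 : ∀ i, MemLp (h i) 2 μ) (hX2 : ∀ i m, MemLp (X i m) 2 μ) (hn2 : MemLp n 2 μ)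
    (hhind : ∀ i, Indep (MeasurableSpace.comap (h i) inferInstance) m μ)
    (hnind : Indep (MeasurableSpace.comap n inferInstance) m μ)
    (hEh : ∀ i, ∫ ω, h i ω ∂μ = mh) (hEh2 : ∀ i, ∫ ω, (h i ω) ^ 2 ∂μ = σ)
    (hEn : ∫ ω, n ω ∂μ = 0) (hVn : ∫ ω, ‖n ω‖ ^ 2 ∂μ ≤ s)
    (hEX : ∀ i j, μ[X i j | m] =ᵐ[μ] g)
    (hVX : ∀ i j, ∀ᵐ ω ∂μ, (μ[fun ω' => ‖X i j ω'‖ ^ 2 | m]) ω ≤ V ^ 2)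
    (v : Ω → EuclideanSpace ℝ (Fin d))
    (hv : v = fun ω => (∑ i : Fin N, h i ω • ((1 / (M : ℝ)) • ∑ m : Fin M, X i m ω)) + n ω) :
    MemLp v 2 μ ∧ MemLp g 2 μ ∧ ∫ ω, ‖g ω‖ ^ 2 ∂μ ≤ V ^ 2 ∧
    ∫ ω, inner ℝ (g ω) (v ω) ∂μ = N * mh * ∫ ω, ‖g ω‖ ^ 2 ∂μ ∧
    ∫ ω, ‖v ω‖ ^ 2 ∂μ ≤ N * σ * V ^ 2 + N * (N - 1) * mh ^ 2 * ∫ ω, ‖g ω‖ ^ 2 ∂μ + s := by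
  have hvm : AEStronglyMeasurable v μ := by
    rw [hv]
    refine AEStronglyMeasurable.add (Finset.aestronglyMeasurable_fun_sum _ fun i _ => ?_) hn2.1
    exact (hh2 i).1.smul 
      ((Finset.aestronglyMeasurable_fun_sum Finset.univ fun j _ => (hX2 i j).1).const_smul (1 / (M : ℝ)))
  have key : ∀ᵐ ω ∂μ, ‖g ω‖ ^ 2 ≤ V ^ 2 ∧ MemLp v 2 (condExpKernel μ m ω) ∧
      ∫ y, v y ∂(condExpKernel μ m ω) = ((N : ℝ) * mh) • g ω ∧
      ∫ y, ‖v y‖ ^ 2 ∂(condExpKernel μ m ω)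
        ≤ N * σ * V ^ 2 + N * (N - 1) * mh ^ 2 * ‖g ω‖ ^ 2 + s := by
    have k1 := ota_ae_iIndepFun_cond hm μ _ (otaFam_aemeas μ h X n (fun i => (hh2 i).1.aemeasurable)
      (fun i m => (hX2 i m).1.aemeasurable) hn2.1.aemeasurable) hind
    have k2 := ae_all_iff.2 fun i => ota_memLp_kernel hm μ _ (hh2 i)
    have k3 := ae_all_iff.2 fun i => ae_all_iff.2 fun j => ota_memLp_kernel hm μ _ (hX2 i j)
    have k4 := ota_memLp_kernel hm μ _ hn2
    have k5 := ae_all_iff.2 fun i => ota_condExp_const hm μ (h i) (hh2 i).1.aemeasurable (hhind i)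
      (fun x => x) stronglyMeasurable_id ((hh2 i).integrable (by norm_num))
    have k6 := ae_all_iff.2 fun i => ota_condExp_const hm μ (h i) (hh2 i).1.aemeasurable (hhind i)
      (fun x => x ^ 2) (by fun_prop) ((hh2 i).integrable_sq)
    have k7 := ota_condExp_const hm μ n hn2.1.aemeasurable hnind
      (fun x => x) stronglyMeasurable_id (hn2.integrable (by norm_num))
    have k8 := ota_condExp_const hm μ n hn2.1.aemeasurable hnind
      (fun x => ‖x‖ ^ 2) (by fun_prop) (hn2.integrable_norm_pow (by norm_num))
    have k9 := ae_all_iff.2 fun i => ae_all_iff.2 fun j => hEX i j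
    have k10 := ae_all_iff.2 fun i => ae_all_iff.2 fun j => hVX i j
    have k11 := ae_all_iff.2 fun i => ae_all_iff.2 fun j =>
      condExp_ae_eq_integral_condExpKernel hm ((hX2 i j).integrable (by norm_num))
    have k12 := ae_all_iff.2 fun i => ae_all_iff.2 fun j =>
      condExp_ae_eq_integral_condExpKernel hm ((hX2 i j).integrable_norm_pow (by norm_num))
    filter_upwards [k1, k2, k3, k4, k5, k6, k7, k8, k9, k10, k11, k12] with
      ω a1 a2 a3 a4 a5 a6 a7 a8 a9 a10 a11 a12
    have b1 : ∀ i j, ∫ y, X i j y ∂(condExpKernel μ m ω) = g ω := fun i j => by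
      rw [← a11, a9]
    have b2 : ∀ i j, ∫ y, ‖X i j y‖ ^ 2 ∂(condExpKernel μ m ω) ≤ V ^ 2 := fun i j => by
      rw [← a12]; exact a10 i j
    refine ⟨?_, ?_⟩
    · rw [← b1 ⟨0, hN⟩ ⟨0, hM⟩]
      exact (ota_jensen _ _ (a3 _ _)).trans (b2 _ _)
    · rw [hv]
      exact ota_moments (condExpKernel μ m ω) hM h X n mh σ V s hσ (g ω) a1 a2 a3 a4
        (fun i => (a5 i).trans (hEh i)) (fun i => (a6 i).trans (hEh2 i)) (a7.trans hEn)
        (a8.trans_le hVn) b1 b2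
  have hgm : AEStronglyMeasurable g μ := (hg.mono hm).aestronglyMeasurable
  have hg2 : MemLp g 2 μ := by
    refine MemLp.of_bound hgm |V| ?_
    filter_upwards [key] with ω hω
    rw [← abs_of_nonneg (norm_nonneg (g ω))]
    exact sq_le_sq.1 hω.1
  have hgi : Integrable (fun ω => ‖g ω‖ ^ 2) μ := hg2.integrable_norm_pow (by norm_num)
  have hN1 : (0 : ℝ) ≤ N * (N - 1) * mh ^ 2 := by
    have : (1 : ℝ) ≤ N := by exact_mod_cast hN
    have : (0 : ℝ) ≤ N - 1 := by linarith
    positivity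
  have hvsq : Integrable (fun ω => ‖v ω‖ ^ 2) μ := by
    have hsm : AEStronglyMeasurable (fun ω => ‖v ω‖ ^ 2) μ := hvm.norm.pow 2
    have hae : ∀ᵐ a ∂μ, v =ᵐ[condExpKernel μ m a] hvm.mk v := by
      apply ae_of_ae_trim hm
      refine Measure.ae_ae_of_ae_comp ?_
      rw [condExpKernel_comp_trim hm]
      exact hvm.ae_eq_mk
    obtain ⟨F, hFm, hFa, hFk⟩ : ∃ F : Ω → EuclideanSpace ℝ (Fin d), Measurable F ∧ v =ᵐ[μ] F ∧
        ∀ᵐ a ∂μ, v =ᵐ[condExpKernel μ m a] F :=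
      ⟨hvm.mk v, hvm.stronglyMeasurable_mk.measurable, hvm.ae_eq_mk, hae⟩
    have hfm : Measurable (fun ω => ENNReal.ofReal (‖F ω‖ ^ 2)) := by
      fun_prop
    have h1 : ∫⁻ ω, ENNReal.ofReal (‖F ω‖ ^ 2) ∂μ
        = ∫⁻ a, ∫⁻ ω, ENNReal.ofReal (‖F ω‖ ^ 2) ∂(condExpKernel μ m a) ∂μ := by
      conv_lhs => rw [← condExpKernel_comp_trim (μ := μ) hm]
      rw [Measure.lintegral_bind (Kernel.aemeasurable _) hfm.aemeasurable,
        lintegral_trim hm hfm.lintegral_kernel]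
    have h2 : ∫⁻ ω, ENNReal.ofReal (‖v ω‖ ^ 2) ∂μ = ∫⁻ ω, ENNReal.ofReal (‖F ω‖ ^ 2) ∂μ := by
      apply lintegral_congr_ae
      filter_upwards [hFa] with ω hω
      rw [← hω]
    refine ⟨hsm, ?_⟩
    rw [hasFiniteIntegral_iff_ofReal (Filter.Eventually.of_forall fun ω => sq_nonneg _), h2, h1]
    calc _ ≤ ∫⁻ _, ENNReal.ofReal (N * σ * V ^ 2 + N * (N - 1) * mh ^ 2 * V ^ 2 + s) ∂μ := by
          apply lintegral_mono_ae
          filter_upwards [hFk, key] with a ha hk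
          have e1 : ∫⁻ ω, ENNReal.ofReal (‖F ω‖ ^ 2) ∂(condExpKernel μ m a)
              = ∫⁻ ω, ENNReal.ofReal (‖v ω‖ ^ 2) ∂(condExpKernel μ m a) := by
            apply lintegral_congr_ae
            filter_upwards [ha] with ω hω
            rw [← hω]
          rw [e1, ← ofReal_integral_eq_lintegral_ofReal (hk.2.1.integrable_norm_pow (by norm_num))
            (Filter.Eventually.of_forall fun ω => sq_nonneg _)]
          apply ENNReal.ofReal_le_ofReal
          refine hk.2.2.2.trans ?_
          have := mul_le_mul_of_nonneg_left hk.1 hN1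
          linarith
      _ < ⊤ := by simp
  have hv2 : MemLp v 2 μ := (memLp_two_iff_integrable_sq_norm hvm).2 hvsq
  have hv1 : Integrable v μ := hv2.integrable (by norm_num)
  refine ⟨hv2, hg2, ?_, ?_, ?_⟩
  · calc ∫ ω, ‖g ω‖ ^ 2 ∂μ ≤ ∫ ω, V ^ 2 ∂μ :=
        integral_mono_ae hgi (integrable_const _) (key.mono fun ω hω => hω.1)
      _ = V ^ 2 := by simp
  · have hgv : Integrable (fun ω => innerSL ℝ (g ω) (v ω)) μ := ota_integrable_inner hg2 hv2
    have e := condExp_bilin_of_aestronglyMeasurable_left (innerSL ℝ) hg.aestronglyMeasurable hgv hv1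
    have e2 := condExp_ae_eq_integral_condExpKernel hm hv1
    have e3 := integral_condExp hm (f := fun ω => innerSL ℝ (g ω) (v ω)) (μ := μ)
    rw [integral_congr_ae e] at e3
    have e3' : ∫ ω, inner ℝ (g ω) ((μ[v|m]) ω) ∂μ = ∫ ω, inner ℝ (g ω) (v ω) ∂μ := e3
    rw [← e3', ← integral_const_mul]
    apply integral_congr_ae
    filter_upwards [e2, key] with ω a b
    rw [a, b.2.2.1, real_inner_smul_right, real_inner_self_eq_norm_sq]
  · have e2 := condExp_ae_eq_integral_condExpKernel hm hvsq
    rw [← integral_condExp hm (f := fun ω => ‖v ω‖ ^ 2)]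
    calc ∫ ω, (μ[fun ω => ‖v ω‖ ^ 2 | m]) ω ∂μ
        ≤ ∫ ω, (N * σ * V ^ 2 + N * (N - 1) * mh ^ 2 * ‖g ω‖ ^ 2 + s) ∂μ := by
          apply integral_mono_ae integrable_condExp
          · exact ((integrable_const _).add (hgi.const_mul _)).add (integrable_const _)
          · filter_upwards [e2, key] with ω a b
            rw [a]; exact b.2.2.2
      _ = _ := by
          have i1 : Integrable (fun ω => N * σ * V ^ 2 + N * (N - 1) * mh ^ 2 * ‖g ω‖ ^ 2) μ :=
            (integrable_const _).add (hgi.const_mul _)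
          rw [integral_add i1 (integrable_const _),
            integral_add (integrable_const _) (hgi.const_mul _), integral_const_mul]
          simp [integral_const_mul]

/-- Theorem 2 of the paper: convergence without the channel-statistics
condition.  If `0 < α ≤ 1/(m_h L)` and `Λ' = M(N+1)m_h² + σ_h²`, then for every `K ≥ 1`,
`(1/K) Σ_{k<K} E[‖∇J(θ^k)‖²] ≤ 2 M N m_h (J(θ⁰) - J*)/(α K Λ') + M σ_h² V²/Λ'
  + σ_h² V²/Λ' + M σ̄²/(N Λ')`. -/
theorem overTheAir_convergence_general
    {d : ℕ} (hd : 1 ≤ d) {N M : ℕ} (hN : 0 < N) (hM : 0 < M)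
    {Ω : Type*} [mΩ : MeasurableSpace Ω] [StandardBorelSpace Ω] [Nonempty Ω]
    (μ : Measure Ω) [IsProbabilityMeasure μ]
    (m_h σ_h2 V σbar2 α L : ℝ)
    (hm : 0 < m_h) (hσh : 0 ≤ σ_h2) (hV : 0 ≤ V) (hσbar : 0 ≤ σbar2)
    (hL : 0 < L) (hα : 0 < α) (hαL : α ≤ 1 / (m_h * L))
    (J : EuclideanSpace ℝ (Fin d) → ℝ) (hJ : Differentiable ℝ J)
    (hLip : ∀ x y : EuclideanSpace ℝ (Fin d),
      ‖gradient J x - gradient J y‖ ≤ L * ‖x - y‖)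
    (Jstar : ℝ) (hJstar : IsGLB (Set.range J) Jstar)
    (𝓕 : Filtration ℕ mΩ)
    (h : ℕ → Fin N → Ω → ℝ)
    (X : ℕ → Fin N → Fin M → Ω → EuclideanSpace ℝ (Fin d))
    (n : ℕ → Ω → EuclideanSpace ℝ (Fin d))
    (θ : ℕ → Ω → EuclideanSpace ℝ (Fin d))
    (θ0 : EuclideanSpace ℝ (Fin d)) (hθ0 : θ 0 = fun _ => θ0)
    (v : ℕ → Ω → EuclideanSpace ℝ (Fin d))
    (hv : ∀ k, v k = fun ω =>
      (∑ i : Fin N, h k i ω • ((1 / (M : ℝ)) • ∑ m : Fin M, X k i m ω)) + n k ω)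
    (hθ : ∀ k, θ (k + 1) = fun ω => θ k ω - (α / (N : ℝ)) • v k ω)
    (hθmeas : ∀ k, Measurable[𝓕 k] (θ k))
    (hh2 : ∀ k i, MemLp (h k i) 2 μ)
    (hX2 : ∀ k i m, MemLp (X k i m) 2 μ)
    (hn2 : ∀ k, MemLp (n k) 2 μ)
    (hcondind : ∀ k, iCondIndepFun (𝓕 k) (𝓕.le k)
      (otaFam (h k) (X k) (n k)) μ)
    (hhind : ∀ k i, Indep (MeasurableSpace.comap (h k i) inferInstance) (𝓕 k) μ)
    (hnind : ∀ k, Indep (MeasurableSpace.comap (n k) inferInstance) (𝓕 k) μ)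
    (hEh : ∀ k i, ∫ ω, h k i ω ∂μ = m_h)
    (hEh2 : ∀ k i, ∫ ω, (h k i ω) ^ 2 ∂μ = σ_h2)
    (hEn : ∀ k, ∫ ω, n k ω ∂μ = 0)
    (hVn : ∀ k, ∫ ω, ‖n k ω‖ ^ 2 ∂μ ≤ σbar2)
    (hEX : ∀ k i m, μ[X k i m | 𝓕 k] =ᵐ[μ] fun ω => gradient J (θ k ω))
    (hVX : ∀ k i m, ∀ᵐ ω ∂μ, (μ[fun ω' => ‖X k i m ω'‖ ^ 2 | 𝓕 k]) ω ≤ V ^ 2)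
    (Λ' : ℝ) (hΛ' : Λ' = (M : ℝ) * ((N : ℝ) + 1) * m_h ^ 2 + σ_h2) :
    ∀ K : ℕ, 1 ≤ K →
      (1 / (K : ℝ)) * ∑ k ∈ Finset.range K, ∫ ω, ‖gradient J (θ k ω)‖ ^ 2 ∂μ ≤
        2 * (M : ℝ) * (N : ℝ) * m_h * (J θ0 - Jstar) / (α * (K : ℝ) * Λ')
          + (M : ℝ) * σ_h2 * V ^ 2 / Λ'
          + σ_h2 * V ^ 2 / Λ'
          + (M : ℝ) * σbar2 / ((N : ℝ) * Λ') := by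
  have hN' : (0 : ℝ) < N := by exact_mod_cast hN
  have hM' : (0 : ℝ) < M := by exact_mod_cast hM
  have hΛ : 0 < Λ' := by rw [hΛ']; positivity
  have hgc : Continuous (gradient J) := by
    refine (LipschitzWith.of_dist_le_mul (K := ⟨L, hL.le⟩) fun x y => ?_).continuous
    rw [dist_eq_norm, dist_eq_norm]; exact hLip x y
  have hgm : ∀ k, StronglyMeasurable[𝓕 k] (fun ω => gradient J (θ k ω)) := fun k =>
    hgc.stronglyMeasurable.comp_measurable (hθmeas k)
  have step := fun k => ota_step (𝓕.le k) μ hN hM (h k) (X k) (n k) m_h σ_h2 V σbar2 hσh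
    (fun ω => gradient J (θ k ω)) (hgm k) (hcondind k) (hh2 k) (hX2 k) (hn2 k) (hhind k) (hnind k)
    (hEh k) (hEh2 k) (hEn k) (hVn k) (hEX k) (hVX k) (v k) (hv k)
  have hdesc : ∀ k ω, J (θ (k + 1) ω) ≤ J (θ k ω)
      - (α / N) * inner ℝ (gradient J (θ k ω)) (v k ω) + L / 2 * (α / N) ^ 2 * ‖v k ω‖ ^ 2 := by
    intro k ω
    have := ota_descent L J hJ hLip (θ k ω) (-((α / (N : ℝ)) • v k ω))
    rw [inner_neg_right, real_inner_smul_right, norm_neg, norm_smul, mul_pow, Real.norm_eq_abs,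
      sq_abs, ← sub_eq_add_neg] at this
    rw [hθ k]
    simp only
    linarith
  have hlow : ∀ x, Jstar ≤ J x := fun x => hJstar.1 ⟨x, rfl⟩
  have hupi : ∀ k, Integrable (fun ω => J (θ k ω)) μ → Integrable (fun ω => J (θ k ω)
      - (α / N) * inner ℝ (gradient J (θ k ω)) (v k ω)) μ := fun k hk =>
    hk.sub ((ota_integrable_inner (step k).2.1 (step k).1).const_mul _)
  have hvi : ∀ k, Integrable (fun ω => L / 2 * (α / N) ^ 2 * ‖v k ω‖ ^ 2) μ := fun k =>
    ((step k).1.integrable_norm_pow (by norm_num)).const_mul _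
  have hJi : ∀ k, Integrable (fun ω => J (θ k ω)) μ := by
    intro k
    induction k with
    | zero => rw [hθ0]; exact integrable_const _
    | succ k ih =>
      refine integrable_of_le_of_le (g₁ := fun _ => Jstar) ?_
        (Filter.Eventually.of_forall fun ω => hlow _)
        (Filter.Eventually.of_forall fun ω => hdesc k ω) (integrable_const _)
        ((hupi k ih).add (hvi k))
      exact (hJ.continuous.measurable.comp
        ((hθmeas (k + 1)).mono (𝓕.le _) le_rfl)).aestronglyMeasurable
  have hrec : ∀ k, Λ' * ∫ ω, ‖gradient J (θ k ω)‖ ^ 2 ∂μ ≤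
      2 * M * N * m_h / α * (∫ ω, J (θ k ω) ∂μ - ∫ ω, J (θ (k + 1) ω) ∂μ)
        + (M * σ_h2 * V ^ 2 + σ_h2 * V ^ 2 + M * σbar2 / N) := by
    intro k
    obtain ⟨-, -, s1, s2, s3⟩ := step k
    have e := integral_mono (hJi (k + 1)) ((hupi k (hJi k)).add (hvi k)) (hdesc k)
    simp only [Pi.add_apply] at e
    rw [integral_add (hupi k (hJi k)) (hvi k), integral_sub (hJi k)
      ((ota_integrable_inner (step k).2.1 (step k).1).const_mul _), integral_const_mul,
      integral_const_mul, s2] at e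
    have hG0 : 0 ≤ ∫ ω, ‖gradient J (θ k ω)‖ ^ 2 ∂μ := integral_nonneg fun _ => sq_nonneg _
    have hQ0 : 0 ≤ ∫ ω, ‖v k ω‖ ^ 2 ∂μ := integral_nonneg fun _ => sq_nonneg _
    generalize (∫ ω, ‖gradient J (θ k ω)‖ ^ 2 ∂μ) = G at *
    generalize (∫ ω, ‖v k ω‖ ^ 2 ∂μ) = Q at *
    generalize (∫ ω, J (θ k ω) ∂μ) = A at *
    generalize (∫ ω, J (θ (k + 1) ω) ∂μ) = B at *
    have hLa : L * α * m_h ≤ 1 := by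
      rw [le_div_iff₀ (by positivity)] at hαL; linarith
    have c1 : L / 2 * (α / N) ^ 2 * Q ≤ α / (2 * m_h * N ^ 2) * Q := by
      apply mul_le_mul_of_nonneg_right _ hQ0
      rw [le_div_iff₀ (by positivity)]
      have : L / 2 * (α / N) ^ 2 * (2 * m_h * N ^ 2) = α * (L * α * m_h) := by field_simp
      rw [this]; nlinarith
    have c2 : α / (2 * m_h * N ^ 2) * Q ≤ α / (2 * m_h * N ^ 2) *
        (N * σ_h2 * V ^ 2 + N * (N - 1) * m_h ^ 2 * G + σbar2) := by gcongr
    have c3 : B ≤ A - α / N * (N * m_h * G) + α / (2 * m_h * N ^ 2) *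
        (N * σ_h2 * V ^ 2 + N * (N - 1) * m_h ^ 2 * G + σbar2) := by linarith
    have c4 := mul_le_mul_of_nonneg_left c3 (show 0 ≤ 2 * M * N * m_h / α by positivity)
    have c5 : 2 * M * N * m_h / α * (A - α / N * (N * m_h * G) + α / (2 * m_h * N ^ 2) *
        (N * σ_h2 * V ^ 2 + N * (N - 1) * m_h ^ 2 * G + σbar2))
        = 2 * M * N * m_h / α * A - M * (N + 1) * m_h ^ 2 * G + M * σ_h2 * V ^ 2
          + M * σbar2 / N := by
      field_simp; ring
    rw [c5] at c4
    have c6 := mul_le_mul_of_nonneg_left s1 hσh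
    rw [hΛ', mul_sub]
    linarith
  intro K hK
  have hK' : (0 : ℝ) < K := by exact_mod_cast hK
  have hsum := Finset.sum_le_sum fun k (_ : k ∈ Finset.range K) => hrec k
  rw [← Finset.mul_sum, Finset.sum_add_distrib, ← Finset.mul_sum,
    Finset.sum_range_sub' (fun k => ∫ ω, J (θ k ω) ∂μ)] at hsum
  have hE0 : ∫ ω, J (θ 0 ω) ∂μ = J θ0 := by rw [hθ0]; simp
  have hEK : Jstar ≤ ∫ ω, J (θ K ω) ∂μ := by
    have := integral_mono (integrable_const Jstar) (hJi K) (fun ω => hlow _)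
    simpa using this
  rw [hE0, Finset.sum_const, Finset.card_range, nsmul_eq_mul] at hsum
  generalize (∑ k ∈ Finset.range K, ∫ ω, ‖gradient J (θ k ω)‖ ^ 2 ∂μ) = S at *
  have h1 : 2 * M * N * m_h / α * (J θ0 - ∫ ω, J (θ K ω) ∂μ)
      ≤ 2 * M * N * m_h / α * (J θ0 - Jstar) := by gcongr
  have h2 : Λ' * S ≤ 2 * M * N * m_h / α * (J θ0 - Jstar)
      + K * (M * σ_h2 * V ^ 2 + σ_h2 * V ^ 2 + M * σbar2 / N) := by linarith
  calc (1 / (K : ℝ)) * S = (1 / (K * Λ')) * (Λ' * S) := by field_simp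
    _ ≤ (1 / (K * Λ')) * (2 * M * N * m_h / α * (J θ0 - Jstar)
      + K * (M * σ_h2 * V ^ 2 + σ_h2 * V ^ 2 + M * σbar2 / N)) := by gcongr
    _ = _ := by field_simp; ring
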